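/- For a partition λ = (s^r) + μ ∪ ν' containing the r×s rectangle with μ having at most r parts and ν at most s parts, the hook Schur function (supersymmetric Schur function) factorizes as hs_λ(x₁,…,x_r / y₁,…,y_s) = ∏_{i=1}^{r} ∏_{j=1}^{s} (xᵢ + yⱼ) · s_μ(x₁,…,x_r) · s_ν(y₁,…,y_s). -/

import Mathlib

/-- Complete homogeneous symmetric polynomial `h_k` evaluated at `x : Fin m → K`:
the sum of all monomials of degree `k` (indexed by weakly increasing tuples). -/
def hcomplete {K : Type*} [CommRing K] {m : ℕ} (x : Fin m → K) (k : ℕ) : K :=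
  ∑ f ∈ Finset.univ.filter
      (fun f : Fin k → Fin m => ∀ i j : Fin k, i ≤ j → f i ≤ f j),
    ∏ i, x (f i)

/-- Elementary symmetric polynomial `e_k` evaluated at `y : Fin m → K`
(indexed by strictly increasing tuples). -/
def eelem {K : Type*} [CommRing K] {m : ℕ} (y : Fin m → K) (k : ℕ) : K :=
  ∑ f ∈ Finset.univ.filter
      (fun f : Fin k → Fin m => ∀ i j : Fin k, i < j → f i < f j),
    ∏ i, y (f i)

/-- `h_k` extended by `0` to negative integer indices. -/
def hz {K : Type*} [CommRing K] {m : ℕ} (x : Fin m → K) (k : ℤ) : K :=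
  if k < 0 then 0 else hcomplete x k.toNat

/-- Schur polynomial `s_μ(x₁,…,x_m)` via the Jacobi–Trudi determinant
`det(h_{μ_i - i + j})_{0 ≤ i,j < m}`. -/
noncomputable def schur {K : Type*} [CommRing K] {m : ℕ} (x : Fin m → K)
    (mu : ℕ → ℕ) : K :=
  Matrix.det (Matrix.of fun i j : Fin m => hz x ((mu i : ℤ) - i + j))

/-- Supersymmetric complete function `H_k(x/y) = Σ_{a+b=k} h_a(x) e_b(y)`. -/
def superH {K : Type*} [CommRing K] {r s : ℕ} (x : Fin r → K) (y : Fin s → K)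
    (k : ℕ) : K :=
  ∑ j ∈ Finset.range (k + 1), hcomplete x (k - j) * eelem y j

/-- `H_k(x/y)` extended by `0` to negative integer indices. -/
def superHz {K : Type*} [CommRing K] {r s : ℕ} (x : Fin r → K) (y : Fin s → K)
    (k : ℤ) : K :=
  if k < 0 then 0 else superH x y k.toNat

/-- The hook Schur (supersymmetric Schur) function `hs_λ(x/y)` via the super
Jacobi–Trudi determinant `det(H_{λ_i - i + j})` of size `m ≥ ℓ(λ)`. -/
noncomputable def hookSchur {K : Type*} [CommRing K] {r s : ℕ} (x : Fin r → K)
    (y : Fin s → K) (m : ℕ) (lam : ℕ → ℕ) : K :=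
  Matrix.det (Matrix.of fun i j : Fin m => superHz x y ((lam i : ℤ) - i + j))

namespace HookSchur

open PowerSeries

section GeneratingFunctions

variable {K : Type*} [CommRing K]

theorem hcomplete_zero {m : ℕ} (x : Fin m → K) : hcomplete x 0 = 1 := by
  simp [hcomplete]

theorem eelem_zero {m : ℕ} (y : Fin m → K) : eelem y 0 = 1 := by
  simp [eelem]

theorem hcomplete_succ_of_isEmpty (x : Fin 0 → K) (k : ℕ) : hcomplete x (k + 1) = 0 :=
  Finset.sum_eq_zero fun f _ => (f 0).elim0

theorem eelem_succ_of_isEmpty (y : Fin 0 → K) (k : ℕ) : eelem y (k + 1) = 0 :=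
  Finset.sum_eq_zero fun f _ => (f 0).elim0

theorem hcomplete_succ {m : ℕ} (x : Fin (m + 1) → K) (k : ℕ) :
    hcomplete x (k + 1) = x 0 * hcomplete x k + hcomplete (Fin.tail x) (k + 1) := by
  unfold hcomplete
  rw [← Finset.sum_filter_add_sum_filter_not _ (fun f : Fin (k + 1) → Fin (m + 1) => f 0 = 0),
    Finset.mul_sum]
  congr 1 <;> symm
  · refine Finset.sum_nbij (fun g => Fin.cons 0 g) ?_ ?_ ?_ ?_
    · intro g hg
      simp only [Finset.mem_filter, Finset.mem_univ, true_and] at hg ⊢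
      refine ⟨fun i j hij => ?_, rfl⟩
      cases i using Fin.cases with
      | zero => simp
      | succ i =>
        cases j using Fin.cases with
        | zero => simp at hij
        | succ j => simpa using hg i j (by simpa using hij)
    · exact fun g _ g' _ h => (Fin.cons_injective2 h).2
    · intro f hf
      simp only [Finset.coe_filter, Finset.mem_filter, Finset.mem_univ, true_and,
        Set.mem_ofPred_eq] at hf
      refine ⟨Fin.tail f, ?_, ?_⟩
      · simpa [Fin.tail] using
          fun (i j : Fin k) hij => hf.1 i.succ j.succ (Fin.succ_le_succ_iff.2 hij)
      · change Fin.cons 0 (Fin.tail f) = f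
        rw [← hf.2, Fin.cons_self_tail]
    · intro g _
      simp [Fin.prod_univ_succ]
  · refine Finset.sum_nbij (fun g i => (g i).succ) ?_ ?_ ?_ ?_
    · intro g hg
      simp only [Finset.mem_filter, Finset.mem_univ, true_and] at hg ⊢
      exact ⟨fun i j hij => by simpa using hg i j hij, Fin.succ_ne_zero _⟩
    · exact fun g _ g' _ h => funext fun i => Fin.succ_injective _ (congrFun h i)
    · intro f hf
      simp only [Finset.coe_filter, Finset.mem_filter, Finset.mem_univ, true_and,
        Set.mem_ofPred_eq] at hf
      have hne : ∀ i, f i ≠ 0 := fun i h0 =>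
        hf.2 (Fin.le_zero_iff.1 (h0 ▸ hf.1 0 i (Fin.zero_le i)))
      refine ⟨fun i => (f i).pred (hne i), ?_, ?_⟩
      · simpa using hf.1
      · simp
    · intro g _
      simp [Fin.tail]

theorem eelem_succ {m : ℕ} (y : Fin (m + 1) → K) (k : ℕ) :
    eelem y (k + 1) = y 0 * eelem (Fin.tail y) k + eelem (Fin.tail y) (k + 1) := by
  unfold eelem
  rw [← Finset.sum_filter_add_sum_filter_not _ (fun f : Fin (k + 1) → Fin (m + 1) => f 0 = 0),
    Finset.mul_sum]
  congr 1 <;> symm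
  · refine Finset.sum_nbij (fun g => Fin.cons 0 fun i => (g i).succ) ?_ ?_ ?_ ?_
    · intro g hg
      simp only [Finset.mem_filter, Finset.mem_univ, true_and] at hg ⊢
      refine ⟨fun i j hij => ?_, rfl⟩
      cases j using Fin.cases with
      | zero => simp at hij
      | succ j =>
        cases i using Fin.cases with
        | zero => simp
        | succ i => simpa using hg i j (by simpa using hij)
    · exact fun g _ g' _ h => funext fun i =>
        Fin.succ_injective _ (congrFun (Fin.cons_injective2 h).2 i)
    · intro f hf
      simp only [Finset.coe_filter, Finset.mem_filter, Finset.mem_univ, true_and,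
        Set.mem_ofPred_eq] at hf
      have hne : ∀ i : Fin k, f i.succ ≠ 0 := fun i => by
        have := hf.1 0 i.succ (Fin.succ_pos i)
        exact (hf.2 ▸ this).ne'
      refine ⟨fun i => (f i.succ).pred (hne i), ?_, ?_⟩
      · simpa using fun (i j : Fin k) hij => hf.1 i.succ j.succ (by simpa using hij)
      · funext i
        cases i using Fin.cases with
        | zero => simp [hf.2]
        | succ i => simp
    · intro g _
      simp [Fin.prod_univ_succ, Fin.tail]
  · refine Finset.sum_nbij (fun g i => (g i).succ) ?_ ?_ ?_ ?_
    · intro g hg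
      simp only [Finset.mem_filter, Finset.mem_univ, true_and] at hg ⊢
      exact ⟨fun i j hij => by simpa using hg i j hij, Fin.succ_ne_zero _⟩
    · exact fun g _ g' _ h => funext fun i => Fin.succ_injective _ (congrFun h i)
    · intro f hf
      simp only [Finset.coe_filter, Finset.mem_filter, Finset.mem_univ, true_and,
        Set.mem_ofPred_eq] at hf
      have hne : ∀ i, f i ≠ 0 := fun i h0 => by
        rcases eq_or_ne i 0 with rfl | hi
        · exact hf.2 h0
        · exact absurd (h0 ▸ hf.1 0 i (Fin.pos_iff_ne_zero.2 hi)) (Fin.not_lt_zero _)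
      refine ⟨fun i => (f i).pred (hne i), ?_, ?_⟩
      · simpa using hf.1
      · simp
    · intro g _
      simp [Fin.tail]

theorem mk_hcomplete_mul_prod {m : ℕ} (x : Fin m → K) :
    PowerSeries.mk (hcomplete x) * ∏ i, (1 - C (x i) * X) = 1 := by
  induction m with
  | zero =>
    ext k
    cases k <;> simp [hcomplete_zero, hcomplete_succ_of_isEmpty, coeff_one]
  | succ m ih =>
    have key : PowerSeries.mk (hcomplete x) * (1 - C (x 0) * X)
        = PowerSeries.mk (hcomplete (Fin.tail x)) := by
      ext k
      cases k with
      | zero => simp [hcomplete_zero]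
      | succ k =>
        rw [mul_sub, mul_one, ← mul_assoc, map_sub, coeff_succ_mul_X, mul_comm _ (C (x 0)),
          coeff_C_mul, coeff_mk, coeff_mk, coeff_mk, hcomplete_succ]
        ring
    rw [Fin.prod_univ_succ, ← mul_assoc, key]
    exact ih (Fin.tail x)

theorem mk_eelem {m : ℕ} (y : Fin m → K) :
    PowerSeries.mk (eelem y) = ∏ i, (1 + C (y i) * X) := by
  induction m with
  | zero =>
    ext k
    cases k <;> simp [eelem_zero, eelem_succ_of_isEmpty, coeff_one]
  | succ m ih =>
    rw [Fin.prod_univ_succ]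
    refine Eq.trans ?_ (congrArg _ (ih (Fin.tail y)))
    ext k
    cases k with
    | zero => simp [eelem_zero]
    | succ k =>
      rw [add_mul, one_mul, mul_assoc, map_add, coeff_C_mul, coeff_succ_X_mul, coeff_mk, coeff_mk,
        coeff_mk, eelem_succ]
      ring

theorem mk_superH {r s : ℕ} (x : Fin r → K) (y : Fin s → K) :
    PowerSeries.mk (superH x y) = PowerSeries.mk (hcomplete x) * PowerSeries.mk (eelem y) := by
  ext k
  rw [mul_comm, coeff_mul, Finset.Nat.sum_antidiagonal_eq_sum_range_succ_mk]
  simp [superH, mul_comm]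

/-- The coefficients of a power series, extended by `0` to negative indices. -/
noncomputable def coeffZ (F : K⟦X⟧) (k : ℤ) : K :=
  if k < 0 then 0 else coeff k.toNat F

theorem hz_eq_coeffZ {m : ℕ} (x : Fin m → K) (k : ℤ) :
    hz x k = coeffZ (PowerSeries.mk (hcomplete x)) k := by
  simp [hz, coeffZ]

theorem superHz_eq_coeffZ {r s : ℕ} (x : Fin r → K) (y : Fin s → K) (k : ℤ) :
    superHz x y k
      = coeffZ (PowerSeries.mk (hcomplete x) * PowerSeries.mk (eelem y)) k := by
  simp [superHz, coeffZ, ← mk_superH]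

theorem coeffZ_natCast (F : K⟦X⟧) (k : ℕ) : coeffZ F k = coeff k F := by
  simp [coeffZ]

theorem coeffZ_of_neg (F : K⟦X⟧) {k : ℤ} (hk : k < 0) : coeffZ F k = 0 := if_pos hk

theorem coeffZ_one (k : ℤ) : coeffZ (1 : K⟦X⟧) k = if k = 0 then 1 else 0 := by
  rcases lt_or_ge k 0 with hk | hk
  · rw [coeffZ_of_neg _ hk, if_neg hk.ne]
  · lift k to ℕ using hk
    simp [coeffZ_natCast, coeff_one]

theorem coeffZ_mul_one_add (F : K⟦X⟧) (a : K) (k : ℤ) :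
    coeffZ (F * (1 + C a * X)) (k + 1) = coeffZ F (k + 1) + a * coeffZ F k := by
  rcases lt_trichotomy (k + 1) 0 with hk | hk | hk
  · simp [coeffZ_of_neg _ hk, coeffZ_of_neg F (show k < 0 by omega)]
  · rw [coeffZ_of_neg F (show k < 0 by omega), hk]
    simp [coeffZ]
  · lift k to ℕ using (by omega)
    rw [← Nat.cast_add_one, coeffZ_natCast, coeffZ_natCast, coeffZ_natCast, mul_add, mul_one,
      ← mul_assoc, map_add, coeff_succ_mul_X, mul_comm F, coeff_C_mul]

theorem coeffZ_mul (F G : K⟦X⟧) (p : ℤ) (k : ℕ)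
    (h : p ≤ k ∨ ∀ d, k < d → coeff d G = 0) :
    coeffZ (F * G) p = ∑ d ∈ Finset.range (k + 1), coeffZ F (p - d) * coeff d G := by
  rcases lt_or_ge p 0 with hp | hp
  · rw [coeffZ_of_neg _ hp, Finset.sum_eq_zero]
    intro d _
    rw [coeffZ_of_neg _ (by omega), zero_mul]
  · lift p to ℕ using hp
    rw [coeffZ_natCast, mul_comm F, coeff_mul, Finset.Nat.sum_antidiagonal_eq_sum_range_succ_mk]
    have hconv : ∑ d ∈ Finset.range (p + 1), coeff d G * coeff (p - d) F
        = ∑ d ∈ Finset.range (p + 1), coeffZ F ((p : ℤ) - d) * coeff d G := by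
      refine Finset.sum_congr rfl fun d hd => ?_
      rw [← Nat.cast_sub (Nat.lt_succ_iff.1 (Finset.mem_range.1 hd)), coeffZ_natCast, mul_comm]
    refine hconv.trans ?_
    rcases le_or_gt p k with hpk | hpk
    · refine Finset.sum_subset (Finset.range_mono (by omega)) fun d _ hd => ?_
      rw [coeffZ_of_neg _ (by simp at hd; omega), zero_mul]
    · refine (Finset.sum_subset (Finset.range_mono (by omega)) fun d _ hd => ?_).symm
      rw [(h.resolve_left (by omega)) d (by simp at hd; omega), mul_zero]

theorem sum_coeffZ_mul_coeffZ {N : ℕ} (F G : K⟦X⟧) (a : ℤ) (k : Fin N)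
    (h : a ≤ 0 ∨ ∀ d, (k : ℕ) < d → coeff d G = 0) :
    ∑ j : Fin N, coeffZ F (a + j) * coeffZ G ((k : ℤ) - j) = coeffZ (F * G) (a + k) := by
  rw [coeffZ_mul F G (a + k) k (h.imp_left fun h => by omega),
    Fin.sum_univ_eq_sum_range (fun j : ℕ => coeffZ F (a + j) * coeffZ G ((k : ℤ) - j)) N,
    ← Finset.sum_subset (Finset.range_mono (Nat.succ_le_of_lt k.isLt)), ← Finset.sum_range_reflect]
  · refine Finset.sum_congr rfl fun d hd => ?_
    have hd' : d ≤ k := Nat.lt_succ_iff.1 (Finset.mem_range.1 hd)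
    have h₁ : a + ((k + 1 - 1 - d : ℕ) : ℤ) = a + k - d := by omega
    have h₂ : ((k : ℕ) : ℤ) - ((k + 1 - 1 - d : ℕ) : ℤ) = d := by omega
    rw [h₁, h₂, coeffZ_natCast]
  · intro d _ hd
    rw [coeffZ_of_neg G (by simp at hd; omega), mul_zero]

theorem coeff_prod_one_add {ι : Type*} (S : Finset ι) (a : ι → K) {d : ℕ} (hd : S.card < d) :
    coeff d (∏ i ∈ S, (1 + C (a i) * X)) = 0 := by
  classical
  induction S using Finset.induction_on generalizing d with
  | empty => simp [coeff_one, (show d ≠ 0 by simp at hd; omega)]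
  | insert i S hi ih =>
    rw [Finset.card_insert_of_notMem hi] at hd
    obtain ⟨d, rfl⟩ : ∃ e, d = e + 1 := ⟨d - 1, by omega⟩
    rw [Finset.prod_insert hi, add_mul, one_mul, mul_assoc, map_add, coeff_C_mul,
      coeff_succ_X_mul, ih (by omega), ih (by omega), mul_zero, add_zero]

theorem coeffZ_mk_eelem_of_lt {s : ℕ} (y : Fin s → K) {k : ℤ} (hk : (s : ℤ) < k) :
    coeffZ (PowerSeries.mk (eelem y)) k = 0 := by
  lift k to ℕ using (by omega)
  rw [coeffZ_natCast, mk_eelem, coeff_prod_one_add _ _ (by simpa using hk)]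

end GeneratingFunctions
section Determinants

variable {K : Type*} [CommRing K]

theorem det_coeffZ_mul {N : ℕ} (F : K⟦X⟧) (P : ℕ → K⟦X⟧) (hP₀ : ∀ k, coeff 0 (P k) = 1)
    (hP : ∀ k d, k < d → coeff d (P k) = 0) (a : Fin N → ℤ) :
    (Matrix.of fun i j : Fin N => coeffZ (F * P j) (a i + j)).det
      = (Matrix.of fun i j : Fin N => coeffZ F (a i + j)).det := by
  have hU : (Matrix.of fun j k : Fin N => coeffZ (P k) ((k : ℤ) - j)).det = 1 := by
    rw [Matrix.det_of_isUpperTriangular]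
    · simp [coeffZ, hP₀]
    · intro i j hij
      exact coeffZ_of_neg _ (by simp at hij; omega)
  rw [← mul_one (Matrix.det (Matrix.of fun i j : Fin N => coeffZ F (a i + j))), ← hU,
    ← Matrix.det_mul]
  congr 1
  ext i k
  simp only [Matrix.mul_apply, Matrix.of_apply]
  exact (sum_coeffZ_mul_coeffZ F (P k) (a i) k (Or.inr (hP k))).symm

/-- The product of the factors `1 - x i * X` over the indices `i < k`. -/
noncomputable def partialProd {r : ℕ} (x : Fin r → K) (k : ℕ) : K⟦X⟧ :=
  ∏ i : Fin r with i.val < k, (1 - C (x i) * X)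

theorem coeff_zero_partialProd {r : ℕ} (x : Fin r → K) (k : ℕ) :
    coeff 0 (partialProd x k) = 1 := by
  simp [partialProd, map_prod]

theorem coeff_partialProd_of_lt {r : ℕ} (x : Fin r → K) (k d : ℕ) (hd : k < d) :
    coeff d (partialProd x k) = 0 := by
  have hcard : (Finset.univ.filter fun i : Fin r => i.val < k).card < d := by
    refine lt_of_le_of_lt ?_ hd
    rw [← Finset.card_map Fin.valEmbedding]
    refine (Finset.card_le_card fun i hi => ?_).trans_eq (Finset.card_range k)
    simp only [Finset.mem_map, Finset.mem_filter] at hi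
    obtain ⟨j, hj, rfl⟩ := hi
    simpa using hj.2
  simpa [partialProd, sub_eq_add_neg] using coeff_prod_one_add _ (fun i => -x i) hcard

theorem partialProd_succ {r : ℕ} (x : Fin r → K) (k : Fin r) :
    partialProd x (k + 1) = partialProd x k * (1 - C (x k) * X) := by
  have : (Finset.univ.filter fun i : Fin r => i.val < k + 1)
      = insert k (Finset.univ.filter fun i : Fin r => i.val < k) := by
    ext i
    simp only [Finset.mem_filter, Finset.mem_univ, true_and, Finset.mem_insert, Fin.ext_iff]
    omega
  rw [partialProd, this, Finset.prod_insert (by simp), mul_comm, partialProd]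

theorem mk_hcomplete_mul_partialProd {r : ℕ} (x : Fin r → K) {k : ℕ} (hk : r ≤ k) :
    PowerSeries.mk (hcomplete x) * partialProd x k = 1 := by
  rw [← mk_hcomplete_mul_prod x, partialProd, Finset.filter_true_of_mem]
  exact fun i _ => i.isLt.trans_le hk

theorem det_coeffZ_mul_one_add {r : ℕ} (x : Fin r → K) (F : K⟦X⟧) (a : Fin r → ℤ) (b : K)
    (h : ∀ i, coeffZ (F * partialProd x r) (a i + r) = 0) :
    (Matrix.of fun i j : Fin r => coeffZ (F * (1 + C b * X) * partialProd x j) (a i + 1 + j)).det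
      = (∏ i, (x i + b)) *
        (Matrix.of fun i j : Fin r => coeffZ (F * partialProd x j) (a i + j)).det := by
  have hB : (Matrix.of fun k j : Fin r =>
      (if k = j then x j + b else 0) + (if (k : ℕ) = j + 1 then 1 else 0)).det
        = ∏ i, (x i + b) := by
    rw [Matrix.det_of_isLowerTriangular]
    · simp
    · intro i j hij
      have hij : i < j := hij
      have h1 : i ≠ j := hij.ne
      have h2 : (i : ℕ) ≠ j + 1 := by omega
      simp [h1, h2]
  rw [mul_comm (∏ i, (x i + b)), ← hB, ← Matrix.det_mul]
  congr 1
  ext i j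
  simp only [Matrix.mul_apply, Matrix.of_apply, mul_add (coeffZ _ _), Finset.sum_add_distrib, mul_ite,
    mul_zero, mul_one, Finset.sum_ite_eq', Finset.mem_univ, if_true]
  have hsum : ∑ k : Fin r, (if (k : ℕ) = j + 1 then coeffZ (F * partialProd x k) (a i + k) else 0)
      = coeffZ (F * partialProd x (j + 1)) (a i + j + 1) := by
    rcases Nat.lt_or_ge (j + 1) r with hj | hj
    · rw [Finset.sum_eq_single ⟨j + 1, hj⟩]
      · simp [add_assoc]
      · intro k _ hk
        exact if_neg fun h => hk (Fin.ext h)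
      · simp
    · have hj : (j : ℕ) + 1 = r := by omega
      rw [hj, add_assoc, ← Nat.cast_add_one, hj, h]
      refine Finset.sum_eq_zero fun k _ => if_neg (by omega)
  rw [hsum, partialProd_succ, sub_eq_add_neg, ← neg_mul, ← map_neg, ← mul_assoc,
    coeffZ_mul_one_add, mul_right_comm, add_right_comm, coeffZ_mul_one_add]
  ring

theorem det_coeffZ_mul_eelem {r s : ℕ} (x : Fin r → K) (y : Fin s → K) (a : Fin r → ℤ)
    (ha : ∀ i, 0 < a i + r) :
    (Matrix.of fun i j : Fin r => coeffZ (PowerSeries.mk (hcomplete x) * PowerSeries.mk (eelem y) *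
        partialProd x j) (s + a i + j)).det
      = (∏ i, ∏ j, (x i + y j)) * (Matrix.of fun i j : Fin r => hz x (a i + j)).det := by
  simp_rw [hz_eq_coeffZ]
  induction s with
  | zero =>
    have h1 : PowerSeries.mk (eelem y) = 1 := by simp [mk_eelem]
    simp [h1, det_coeffZ_mul _ _ (coeff_zero_partialProd x) (coeff_partialProd_of_lt x)]
  | succ s ih =>
    have hE : PowerSeries.mk (eelem y)
        = PowerSeries.mk (eelem (y ∘ Fin.castSucc)) * (1 + C (y (Fin.last s)) * X) := by
      simp [mk_eelem, Fin.prod_univ_castSucc]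
    have := det_coeffZ_mul_one_add x
      (PowerSeries.mk (hcomplete x) * PowerSeries.mk (eelem (y ∘ Fin.castSucc)))
      (fun i => s + a i) (y (Fin.last s)) (fun i => by
        rw [mul_right_comm, mk_hcomplete_mul_partialProd x le_rfl, one_mul]
        exact coeffZ_mk_eelem_of_lt _ (by have := ha i; omega))
    rw [ih] at this
    simp_rw [Fin.prod_univ_castSucc, Finset.prod_mul_distrib]
    rw [mul_comm (∏ i, ∏ j : Fin s, (x i + y j.castSucc)), mul_assoc]
    refine Eq.trans ?_ this
    rw [hE]
    congr 1
    ext i j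
    simp only [Matrix.of_apply, ← mul_assoc]
    congr 1
    push_cast
    ring

theorem hookSchur_eq_mul_det {r s n : ℕ} (x : Fin r → K) (y : Fin s → K) (mu : ℕ → ℕ) (lam : ℕ → ℕ)
    (hlam : ∀ i < r, lam i = s + mu i) :
    hookSchur x y (r + n) lam = (∏ i : Fin r, ∏ j : Fin s, (x i + y j)) * schur x mu *
      (Matrix.of fun i j : Fin n =>
        coeffZ (PowerSeries.mk (eelem y)) ((lam (r + i) : ℤ) - i + j)).det := by
  simp_rw [hookSchur, schur, superHz_eq_coeffZ]
  rw [← det_coeffZ_mul _ _ (coeff_zero_partialProd x) (coeff_partialProd_of_lt x),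
    ← Matrix.det_submatrix_equiv_self finSumFinEquiv,
    ← det_coeffZ_mul_eelem x y (fun i => (mu i : ℤ) - i) (fun i => by omega),
    ← Matrix.det_fromBlocks_zero₁₂ _ (Matrix.of fun (i : Fin n) (j : Fin r) =>
      coeffZ (PowerSeries.mk (hcomplete x) * PowerSeries.mk (eelem y) * partialProd x j)
        ((lam (r + i) : ℤ) - (r + i : ℕ) + j))]
  congr 1
  ext (i | i) (j | j)
  · simp [hlam i i.isLt, add_sub_assoc]
  · have hi := hlam i i.isLt
    rw [Matrix.submatrix_apply, Matrix.of_apply, mul_right_comm, finSumFinEquiv_apply_right,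
      mk_hcomplete_mul_partialProd x (by simp), one_mul]
    refine coeffZ_mk_eelem_of_lt _ ?_
    simp [hi]
    omega
  · simp
  · rw [Matrix.submatrix_apply, Matrix.of_apply, mul_right_comm, finSumFinEquiv_apply_right,
      mk_hcomplete_mul_partialProd x (by simp), one_mul]
    simp only [Matrix.fromBlocks_apply₂₂, Matrix.of_apply, finSumFinEquiv_apply_right,
      Fin.val_natAdd]
    congr 1
    push_cast
    ring

end Determinants
section DualJacobiTrudi

theorem det_toBlocks₁₁_of_mul_eq_one {K m n : Type*} [CommRing K] [Fintype m] [Fintype n]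
    [DecidableEq m] [DecidableEq n] {A B : Matrix (m ⊕ n) (m ⊕ n) K} (h : A * B = 1) :
    A.toBlocks₁₁.det = A.det * B.toBlocks₂₂.det := by
  rw [← Matrix.fromBlocks_toBlocks A, ← Matrix.fromBlocks_toBlocks B, Matrix.fromBlocks_multiply,
    ← Matrix.fromBlocks_one, Matrix.fromBlocks_inj] at h
  obtain ⟨-, h₁₂, -, h₂₂⟩ := h
  have hmul : A * Matrix.fromBlocks 1 B.toBlocks₁₂ 0 B.toBlocks₂₂
      = Matrix.fromBlocks A.toBlocks₁₁ 0 A.toBlocks₂₁ 1 := by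
    conv_lhs => rw [← Matrix.fromBlocks_toBlocks A]
    rw [Matrix.fromBlocks_multiply, h₁₂, h₂₂]
    simp
  have hdet := congrArg Matrix.det hmul
  rw [Matrix.det_mul, Matrix.det_fromBlocks_zero₂₁, Matrix.det_fromBlocks_zero₁₂] at hdet
  simpa using hdet.symm

theorem lt_card_filter_iff {s : ℕ} {nu : ℕ → ℕ} (hnu : Antitone nu) (hnu₀ : ∀ j, s ≤ j → nu j = 0)
    (i j : ℕ) : i < ((Finset.range s).filter fun i => j < nu i).card ↔ j < nu i := by
  classical
  have hex : ∃ k, nu k ≤ j := ⟨s, by simp [hnu₀ s le_rfl]⟩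
  have hiff : ∀ i, j < nu i ↔ i < Nat.find hex := fun i => by
    rw [Nat.lt_find_iff]
    exact ⟨fun h k hk => not_le.2 (h.trans_le (hnu hk)), fun h => not_le.1 (h i le_rfl)⟩
  have : ((Finset.range s).filter fun i => j < nu i) = Finset.range (Nat.find hex) := by
    ext i
    rw [Finset.mem_filter, Finset.mem_range, Finset.mem_range, ← hiff, and_iff_right_iff_imp]
    intro h
    by_contra hi
    simp [hnu₀ i (not_lt.1 hi)] at h
  rw [this, Finset.card_range, hiff]

variable {s n : ℕ} {nu c : ℕ → ℕ}

/-- The positions, listed along the boundary of a partition `nu` in an `s × n` box, of the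
vertical steps (on the left summand) and of the horizontal steps (on the right summand);
`c` is the conjugate partition. -/
def boundaryStep (s n : ℕ) (nu c : ℕ → ℕ) : Fin s ⊕ Fin n → ℕ :=
  Sum.elim (fun i => nu i.rev + i) fun j => s + j - c j

theorem boundaryStep_inl_lt_inl (hnu : Antitone nu) {i i' : Fin s} (h : i < i') :
    boundaryStep s n nu c (.inl i) < boundaryStep s n nu c (.inl i') := by
  have : nu i.rev ≤ nu i'.rev := hnu (Fin.val_le_of_le (Fin.rev_le_rev.2 h.le))
  simp only [boundaryStep, Sum.elim_inl]
  omega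

theorem conj_le (hnu₀ : ∀ j, s ≤ j → nu j = 0) (hc : ∀ i j, i < c j ↔ j < nu i) (j : ℕ) :
    c j ≤ s := by
  by_contra! h
  simp [hc, hnu₀ s le_rfl] at h

theorem boundaryStep_inr_lt_inr (hnu₀ : ∀ j, s ≤ j → nu j = 0)
    (hc : ∀ i j, i < c j ↔ j < nu i) {j j' : Fin n} (h : j < j') :
    boundaryStep s n nu c (.inr j) < boundaryStep s n nu c (.inr j') := by
  have h₁ : c j' ≤ c j := by
    by_contra! hlt
    exact lt_irrefl _ ((hc _ _).2 ((Fin.lt_def.1 h).trans ((hc _ _).1 hlt)))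
  have h₂ := conj_le hnu₀ hc j
  simp only [boundaryStep, Sum.elim_inr]
  omega

theorem boundaryStep_inr_lt_inl (hnu₀ : ∀ j, s ≤ j → nu j = 0)
    (hc : ∀ i j, i < c j ↔ j < nu i) {i : Fin s} {j : Fin n} (h : (j : ℕ) < nu i.rev) :
    boundaryStep s n nu c (.inr j) < boundaryStep s n nu c (.inl i) := by
  have h₁ := (hc _ _).2 h
  have h₂ := conj_le hnu₀ hc j
  simp only [boundaryStep, Sum.elim_inr, Sum.elim_inl, Fin.val_rev] at *
  omega

theorem boundaryStep_inl_lt_inr (hnu₀ : ∀ j, s ≤ j → nu j = 0)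
    (hc : ∀ i j, i < c j ↔ j < nu i) {i : Fin s} {j : Fin n} (h : ¬ (j : ℕ) < nu i.rev) :
    boundaryStep s n nu c (.inl i) < boundaryStep s n nu c (.inr j) := by
  have h₁ := (hc _ _).not.2 h
  have h₂ := conj_le hnu₀ hc j
  simp only [boundaryStep, Sum.elim_inr, Sum.elim_inl, Fin.val_rev] at *
  omega

theorem boundaryStep_injective (hnu : Antitone nu) (hnu₀ : ∀ j, s ≤ j → nu j = 0)
    (hc : ∀ i j, i < c j ↔ j < nu i) : Function.Injective (boundaryStep s n nu c) := by
  have hne : ∀ (i : Fin s) (j : Fin n),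
      boundaryStep s n nu c (.inl i) ≠ boundaryStep s n nu c (.inr j) := fun i j => by
    by_cases h : (j : ℕ) < nu i.rev
    · exact (boundaryStep_inr_lt_inl hnu₀ hc h).ne'
    · exact (boundaryStep_inl_lt_inr hnu₀ hc h).ne
  rintro (i | i) (j | j) h
  · rcases lt_trichotomy i j with hij | rfl | hij
    · exact absurd h (boundaryStep_inl_lt_inl hnu hij).ne
    · rfl
    · exact absurd h (boundaryStep_inl_lt_inl hnu hij).ne'
  · exact absurd h (hne i j)
  · exact absurd h.symm (hne j i)
  · rcases lt_trichotomy i j with hij | rfl | hij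
    · exact absurd h (boundaryStep_inr_lt_inr hnu₀ hc hij).ne
    · rfl
    · exact absurd h (boundaryStep_inr_lt_inr hnu₀ hc hij).ne'

theorem boundaryStep_lt (hnu : Antitone nu) (hn : nu 0 ≤ n) (a : Fin s ⊕ Fin n) :
    boundaryStep s n nu c a < s + n := by
  rcases a with i | j
  · have := hnu (Nat.zero_le i.rev)
    simp only [boundaryStep, Sum.elim_inl]
    omega
  · simp only [boundaryStep, Sum.elim_inr]
    omega

theorem exists_perm_boundaryStep (hnu : Antitone nu) (hn : nu 0 ≤ n)
    (hnu₀ : ∀ j, s ≤ j → nu j = 0) (hc : ∀ i j, i < c j ↔ j < nu i) :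
    ∃ π : Equiv.Perm (Fin (s + n)),
      ∀ a, (π (finSumFinEquiv a) : ℕ) = boundaryStep s n nu c a := by
  let f : Fin (s + n) → Fin (s + n) := fun p => ⟨_, boundaryStep_lt (c := c) hnu hn
    (finSumFinEquiv.symm p)⟩
  have hf : Function.Injective f := fun p q h => finSumFinEquiv.symm.injective
    (boundaryStep_injective hnu hnu₀ hc (Fin.val_eq_of_eq h))
  refine ⟨Equiv.ofBijective f (Finite.injective_iff_bijective.1 hf), fun a => ?_⟩
  simp [f]

theorem sign_of_boundaryStep (hnu : Antitone nu) (hnu₀ : ∀ j, s ≤ j → nu j = 0)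
    (hc : ∀ i j, i < c j ↔ j < nu i) (π : Equiv.Perm (Fin (s + n)))
    (hπ : ∀ a, (π (finSumFinEquiv a) : ℕ) = boundaryStep s n nu c a) :
    Equiv.Perm.sign π = ∏ j : Fin n, (-1) ^ c j := by
  have hl : ∀ i : Fin s, (π (Fin.castAdd n i) : ℕ) = boundaryStep s n nu c (.inl i) :=
    fun i => hπ (.inl i)
  have hr : ∀ j : Fin n, (π (Fin.natAdd s j) : ℕ) = boundaryStep s n nu c (.inr j) :=
    fun j => hπ (.inr j)
  rw [Equiv.Perm.sign_eq_prod_prod_Iio, Fin.prod_univ_add, Finset.prod_eq_one, one_mul]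
  · refine Finset.prod_congr rfl fun j _ => ?_
    rw [← Finset.filter_gt_eq_Iio, Finset.prod_filter, Fin.prod_univ_add,
      Finset.prod_eq_one (s := (Finset.univ : Finset (Fin n))), mul_one]
    · rw [← Equiv.prod_comp Fin.revPerm]
      have : ∀ i : Fin s, (if Fin.castAdd n (Fin.revPerm i) < Fin.natAdd s j then
          if π (Fin.castAdd n (Fin.revPerm i)) < π (Fin.natAdd s j) then (1 : ℤˣ) else -1 else 1)
          = if (i : ℕ) < c j then -1 else 1 := fun i => by
        rw [if_pos (by simp [Fin.lt_def]; omega)]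
        by_cases h : (i : ℕ) < c j
        · rw [if_pos h, if_neg]
          rw [Fin.lt_def, hl, hr]
          exact (boundaryStep_inr_lt_inl hnu₀ hc (by simpa using (hc _ _).1 h)).not_gt
        · rw [if_neg h, if_pos]
          rw [Fin.lt_def, hl, hr]
          exact boundaryStep_inl_lt_inr hnu₀ hc (by simpa using (hc _ _).not.1 h)
      simp_rw [this]
      rw [Fin.prod_univ_eq_prod_range (fun i => if i < c j then (-1 : ℤˣ) else 1),
        ← Finset.prod_filter, Finset.prod_const]
      congr 1
      have := conj_le hnu₀ hc j
      rw [show (Finset.range s).filter (· < c j) = Finset.range (c j) by ext; simp; omega,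
        Finset.card_range]
    · intro k _
      split_ifs with h₁ h₂
      · rfl
      · refine absurd ?_ h₂
        rw [Fin.lt_def, hr, hr]
        exact boundaryStep_inr_lt_inr hnu₀ hc (by simpa using h₁)
      · rfl
  · intro i _
    refine Finset.prod_eq_one fun k hk => if_pos ?_
    obtain ⟨k, rfl⟩ : ∃ k' : Fin s, k = Fin.castAdd n k' :=
      ⟨⟨k, by have := Fin.lt_def.1 (Finset.mem_Iio.1 hk); simp at this; omega⟩, rfl⟩
    rw [Fin.lt_def, hl, hl]
    exact boundaryStep_inl_lt_inl hnu (Finset.mem_Iio.1 hk : Fin.castAdd n k < Fin.castAdd n i)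

variable {K : Type*} [CommRing K]

theorem mk_hcomplete_mul_rescale_mk_eelem (y : Fin s → K) :
    PowerSeries.mk (hcomplete y) * rescale (-1) (PowerSeries.mk (eelem y)) = 1 := by
  rw [← mk_hcomplete_mul_prod y, mk_eelem, map_prod]
  congr 1
  refine Finset.prod_congr rfl fun i _ => ?_
  have : rescale (-1) (C (y i)) = C (y i) := by
    ext k
    rcases k with _ | k <;> simp [coeff_rescale, coeff_C]
  rw [map_add, map_one, map_mul, this, rescale_X]
  simp [sub_eq_add_neg]

theorem coeffZ_rescale_neg_one (F : K⟦X⟧) (v j k : ℕ) :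
    coeffZ (rescale (-1) F) ((v : ℤ) - j + k)
      = (-1) ^ (v + j) * ((-1) ^ k * coeffZ F ((v : ℤ) - j + k)) := by
  rcases lt_or_ge ((v : ℤ) - j + k) 0 with h | h
  · simp [coeffZ_of_neg _ h]
  · obtain ⟨p, hp⟩ := Int.eq_ofNat_of_zero_le h
    rw [hp, coeffZ_natCast, coeffZ_natCast, coeff_rescale, ← mul_assoc, ← pow_add,
      show v + j + k = p + 2 * j by omega, pow_add, pow_mul]
    simp

theorem schur_eq_det_eelem (y : Fin s → K) (hnu : Antitone nu) (hn : nu 0 ≤ n)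
    (hnu₀ : ∀ j, s ≤ j → nu j = 0) (hc : ∀ i j, i < c j ↔ j < nu i) :
    schur y nu = (Matrix.of fun i j : Fin n =>
      coeffZ (PowerSeries.mk (eelem y)) ((c i : ℤ) - i + j)).det := by
  obtain ⟨π, hπ⟩ := exists_perm_boundaryStep hnu hn hnu₀ hc
  set F := PowerSeries.mk (hcomplete y)
  set G := rescale (-1) (PowerSeries.mk (eelem y))
  let A : Matrix (Fin (s + n)) (Fin (s + n)) K := Matrix.of fun p q => coeffZ F (-p + q)
  let B : Matrix (Fin (s + n)) (Fin (s + n)) K := Matrix.of fun p q => coeffZ G (q - p)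
  have hAB : A * B = 1 := by
    ext p q
    simp only [A, B, Matrix.mul_apply, Matrix.of_apply]
    rw [sum_coeffZ_mul_coeffZ F G (-p) q (Or.inl (by omega)),
      mk_hcomplete_mul_rescale_mk_eelem, coeffZ_one, Matrix.one_apply]
    exact if_congr (by omega) rfl rfl
  have hA : A.det = 1 := by
    rw [Matrix.det_of_isUpperTriangular]
    · simp [A, F, coeffZ, hcomplete_zero]
    · intro i j hij
      have hij : j < i := hij
      exact coeffZ_of_neg _ (by omega)
  let e : Fin s ⊕ Fin n ≃ Fin (s + n) := finSumFinEquiv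
  have hmul : A.submatrix e (e.trans π) * B.submatrix (e.trans π) e = 1 := by
    rw [Matrix.submatrix_mul_equiv, hAB, Matrix.submatrix_one_equiv]
  have hdetA : (A.submatrix e (e.trans π)).det = ((Equiv.Perm.sign π : ℤ) : K) := by
    rw [← mul_one ((Equiv.Perm.sign π : ℤ) : K), ← hA, ← Matrix.det_permute',
      ← Matrix.det_submatrix_equiv_self e (A.submatrix id π)]
    rfl
  have hschur : (A.submatrix e (e.trans π)).toBlocks₁₁.det = schur y nu := by
    rw [schur, ← Matrix.det_transpose, ← Matrix.det_submatrix_equiv_self Fin.revPerm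
      (Matrix.of fun i j : Fin s => hz y ((nu i : ℤ) - i + j))]
    congr 1
    ext i p
    simp only [Matrix.transpose_apply, Matrix.toBlocks₁₁, Matrix.of_apply, Matrix.submatrix_apply,
      A, Equiv.trans_apply, hz_eq_coeffZ]
    rw [show ((π (e (.inl i)) : ℕ) : ℤ) = _ from congrArg _ (hπ (.inl i))]
    congr 1
    simp [boundaryStep, e]
    omega
  have heelem : (B.submatrix (e.trans π) e).toBlocks₂₂ = Matrix.of fun i j : Fin n =>
      (-1) ^ (c i + i : ℕ) * (Matrix.of fun i j : Fin n => (-1) ^ (j : ℕ) *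
        Matrix.of (fun i j : Fin n =>
          coeffZ (PowerSeries.mk (eelem y)) ((c i : ℤ) - i + j)) i j) i j := by
    ext i j
    simp only [Matrix.toBlocks₂₂, Matrix.of_apply, Matrix.submatrix_apply, B, Equiv.trans_apply]
    rw [← coeffZ_rescale_neg_one, show ((π (e (.inr i)) : ℕ) : ℤ) = _ from congrArg _ (hπ (.inr i))]
    congr 1
    have := conj_le hnu₀ hc i
    simp [boundaryStep, e]
    omega
  have key := det_toBlocks₁₁_of_mul_eq_one hmul
  rw [hschur, hdetA, heelem, Matrix.det_mul_column, Matrix.det_mul_row,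
    sign_of_boundaryStep hnu hnu₀ hc π hπ] at key
  rw [key, ← mul_assoc, ← mul_assoc]
  push_cast
  rw [← Finset.prod_mul_distrib, ← Finset.prod_mul_distrib, Finset.prod_eq_one, one_mul]
  intro i _
  rw [← pow_add, ← pow_add, Even.neg_one_pow ⟨c i + i, by ring⟩]

end DualJacobiTrudi

end HookSchur

/-- for a partition `λ = (s^r) + μ ∪ ν'` containing the `r × s`
rectangle, with `μ` having at most `r` parts and `ν` at most `s` parts, the hook Schur
function factorizes:
`hs_λ(x/y) = ∏_{i,j} (xᵢ + yⱼ) · s_μ(x) · s_ν(y)`  (Macdonald, Ex. I.3.23). -/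
theorem stmt_16 {K : Type*} [CommRing K] (r s : ℕ)
    (x : Fin r → K) (y : Fin s → K)
    (mu nu : ℕ → ℕ) (hmu : Antitone mu) (hnu : Antitone nu)
    (hmu0 : ∀ i, r ≤ i → mu i = 0) (hnu0 : ∀ j, s ≤ j → nu j = 0)
    (lam : ℕ → ℕ)
    (hlam1 : ∀ i < r, lam i = s + mu i)
    (hlam2 : ∀ j, lam (r + j) = ((Finset.range s).filter fun i => j < nu i).card) :
    hookSchur x y (r + nu 0) lam =
      (∏ i : Fin r, ∏ j : Fin s, (x i + y j)) * schur x mu * schur y nu := by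
  have hc : ∀ i j, i < lam (r + j) ↔ j < nu i := fun i j => by
    rw [hlam2, HookSchur.lt_card_filter_iff hnu hnu0]
  rw [HookSchur.hookSchur_eq_mul_det x y mu lam hlam1,
    HookSchur.schur_eq_det_eelem (c := fun j => lam (r + j)) y hnu le_rfl hnu0 hc]
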